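/- For all a, b, c, a', b', c' ∈ ℝ, the Lie algebra g_ℝ(a,b,c) is not isomorphic to the Lie algebra g⁰_ℝ(a',b',c'). -/

import Mathlib

noncomputable section

/-- The bilinear bracket on K^8 determined by structure constants `c i j`
(given for i < j and extended antisymmetrically). -/
def liebr {K : Type*} [Field K] (c : Fin 8 → Fin 8 → Fin 8 → K)
    (x y : Fin 8 → K) : Fin 8 → K :=
  ∑ i : Fin 8, ∑ j : Fin 8,
    (x i * y j) • (if i < j then c i j else if j < i then -(c j i) else 0)

/-- Isomorphism of the bracket structures. -/
def LieIso {K : Type*} [Field K] (c c' : Fin 8 → Fin 8 → Fin 8 → K) : Prop :=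
  ∃ e : (Fin 8 → K) ≃ₗ[K] (Fin 8 → K),
    ∀ x y, e (liebr c x y) = liebr c' (e x) (e y)

/-- Structure constants of g_ℝ(a,b,c). -/
def gc (a b c : ℝ) : Fin 8 → Fin 8 → Fin 8 → ℝ :=
  fun i j =>
    if i = 0 ∧ j = 1 then Pi.single 3 1
    else if i = 0 ∧ j = 2 then Pi.single 4 1
    else if i = 1 ∧ j = 2 then Pi.single 5 1
    else if i = 0 ∧ j = 3 then Pi.single 6 1
    else if i = 0 ∧ j = 4 then Pi.single 7 1
    else if i = 1 ∧ j = 3 then Pi.single 6 1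
    else if i = 1 ∧ j = 4 then Pi.single 7 (-1)
    else if i = 2 ∧ j = 3 then Pi.single 7 (-1)
    else if i = 2 ∧ j = 4 then Pi.single 6 3
    else if i = 1 ∧ j = 5 then (fun k => if k = 6 then a else if k = 7 then b else 0)
    else if i = 2 ∧ j = 5 then (fun k => if k = 6 then c else if k = 7 then -a else 0)
    else 0

/-- Structure constants of g⁰_ℝ(a,b,c). -/
def g0c (a b c : ℝ) : Fin 8 → Fin 8 → Fin 8 → ℝ :=
  fun i j =>
    if i = 0 ∧ j = 1 then Pi.single 3 1
    else if i = 0 ∧ j = 2 then Pi.single 4 1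
    else if i = 1 ∧ j = 2 then Pi.single 5 1
    else if i = 0 ∧ j = 3 then Pi.single 6 1
    else if i = 0 ∧ j = 4 then Pi.single 7 1
    else if i = 1 ∧ j = 5 then (fun k => if k = 6 then a else if k = 7 then b else 0)
    else if i = 2 ∧ j = 5 then (fun k => if k = 6 then c else if k = 7 then -a else 0)
    else 0

/-!
Both algebras are `V ⊕ ⋀²V ⊕ K²` with `V` spanned by `x₁, x₂, x₃`. Identifying `⋀²V` with the dual
of `V` through the cross product, the brackets in `g` satisfy
`[v, [p, w]] = (A v ⬝ (p × w)) x₇ + (B v ⬝ (p × w)) x₈` for two `3 × 3` matrices `A` and `B`.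
In `g⁰` the plane `P = ⟨x₂, x₃⟩` and the vector `p = x₁ ∉ P` satisfy `[v, [p, w]] = 0` for all
`v, w ∈ P`. An isomorphism would give such `p` and `P` for `g`, where the condition says that `A`
and `B` map `P` into the line `K p`. Then `B` kills a nonzero vector of `P`, which forces
`(1, 1, 0) ∈ P`, and comparing `A (1, 1, 0)` with `B v` for a nonzero `v = (s, 0, t)` in `P` puts
`p` into `P`, a contradiction.
-/

open Module Submodule
open scoped Matrix

section LinearAlgebra

variable {K V W : Type*} [Field K] [AddCommGroup V] [Module K V] [AddCommGroup W] [Module K W]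

theorem exists_mem_ne_zero_apply_eq_zero_of_finrank_lt [FiniteDimensional K V]
    [FiniteDimensional K W] (f : V →ₗ[K] W) {P : Submodule K V} {Q : Submodule K W}
    (hPQ : P.map f ≤ Q) (hlt : finrank K Q < finrank K P) : ∃ v ∈ P, v ≠ 0 ∧ f v = 0 := by
  have hker := LinearMap.ker_ne_bot_of_finrank_lt (f := f.restrict (map_le_iff_le_comap.mp hPQ)) hlt
  obtain ⟨v, hv, hv0⟩ := exists_mem_ne_zero_of_ne_bot hker
  exact ⟨v, v.2, by simpa using hv0, congrArg Subtype.val (LinearMap.mem_ker.mp hv)⟩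

theorem linearIndependent_map_basis_comp {ι κ : Type*} [Fintype κ] (b : Basis ι K V)
    {f : V →ₗ[K] W} (hf : Function.Surjective f) (v : κ → ι)
    (hker : ∀ i ∉ Set.range v, f (b i) = 0) (hcard : Fintype.card κ = finrank K W) :
    LinearIndependent K fun k ↦ f (b (v k)) := by
  refine linearIndependent_of_top_le_span_of_card_eq_finrank ?_ hcard
  rw [← LinearMap.range_eq_top.mpr hf, LinearMap.range_eq_map, ← b.span_eq, map_span_le]
  rintro _ ⟨i, rfl⟩
  by_cases hi : i ∈ Set.range v
  · obtain ⟨k, rfl⟩ := hi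
    exact subset_span ⟨k, rfl⟩
  · exact hker i hi ▸ zero_mem _

end LinearAlgebra

section CrossProduct

theorem triple_product_smul {R : Type*} [CommRing R] (p q r u : Fin 3 → R) :
    (p ⬝ᵥ q ⨯₃ r) • u = (u ⬝ᵥ q ⨯₃ r) • p + (u ⬝ᵥ r ⨯₃ p) • q + (u ⬝ᵥ p ⨯₃ q) • r := by
  ext i
  simp only [Matrix.vec3_dotProduct, cross_apply]
  fin_cases i <;> simp <;> ring

variable {K : Type*} [Field K] {p q r : Fin 3 → K}

theorem triple_product_ne_zero (h : LinearIndependent K ![p, q, r]) : p ⬝ᵥ q ⨯₃ r ≠ 0 := by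
  rw [triple_product_eq_det]
  have hunit := Matrix.linearIndependent_rows_iff_isUnit.mp h
  exact ((Matrix.isUnit_iff_isUnit_det _).mp hunit).ne_zero

theorem mem_span_singleton_of_dotProduct_cross_eq_zero (h : LinearIndependent K ![p, q, r])
    {u : Fin 3 → K} (hq : u ⬝ᵥ p ⨯₃ q = 0) (hr : u ⬝ᵥ p ⨯₃ r = 0) : u ∈ K ∙ p := by
  have hr' : u ⬝ᵥ r ⨯₃ p = 0 := by rw [← cross_anticomm, dotProduct_neg, hr, neg_zero]
  have hu := triple_product_smul p q r u
  rw [hq, hr', zero_smul, zero_smul, add_zero, add_zero] at hu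
  rw [← smul_mem_iff _ (triple_product_ne_zero h), hu]
  exact smul_mem _ _ (mem_span_singleton_self p)

theorem map_mulVecLin_span_pair_le (h : LinearIndependent K ![p, q, r])
    (M : Matrix (Fin 3) (Fin 3) K)
    (hM : ∀ v ∈ ({q, r} : Set (Fin 3 → K)), ∀ w ∈ ({q, r} : Set (Fin 3 → K)),
      M *ᵥ v ⬝ᵥ p ⨯₃ w = 0) :
    (span K {q, r}).map M.mulVecLin ≤ K ∙ p := by
  rw [map_span_le]
  exact fun v hv ↦ mem_span_singleton_of_dotProduct_cross_eq_zero h (hM v hv q (by simp))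
    (hM v hv r (by simp))

end CrossProduct

section Brackets

variable {K : Type*} [Field K]

/-- The Plücker coordinates of `x ∧ y`, in which both brackets are written. -/
def plucker (x y : Fin 8 → K) (i j : Fin 8) : K :=
  x i * y j - x j * y i

/-- The bracket of `g(a,b,c)` over an arbitrary field; the coordinate of `x₁` has index `0`. -/
def gBracket (a b c : K) (x y : Fin 8 → K) : Fin 8 → K :=
  let m := plucker x y
  ![0, 0, 0, m 0 1, m 0 2, m 1 2,
    m 0 3 + m 1 3 + 3 * m 2 4 + a * m 1 5 + c * m 2 5,
    m 0 4 - m 1 4 - m 2 3 + b * m 1 5 - a * m 2 5]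

/-- The bracket of `g⁰(a,b,c)` over an arbitrary field; the coordinate of `x₁` has index `0`. -/
def g0Bracket (a b c : K) (x y : Fin 8 → K) : Fin 8 → K :=
  let m := plucker x y
  ![0, 0, 0, m 0 1, m 0 2, m 1 2, m 0 3 + a * m 1 5 + c * m 2 5, m 0 4 + b * m 1 5 - a * m 2 5]

theorem liebr_gc (a b c : ℝ) : liebr (gc a b c) = gBracket a b c := by
  ext x y k
  fin_cases k <;> simp [liebr, gc, gBracket, plucker, Fin.sum_univ_eight] <;> ring

theorem liebr_g0c (a b c : ℝ) : liebr (g0c a b c) = g0Bracket a b c := by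
  ext x y k
  fin_cases k <;> simp [liebr, g0c, g0Bracket, plucker, Fin.sum_univ_eight] <;> ring

/-- The projection of `g(a,b,c)` onto its abelianization, in the basis of the classes of
`x₁, x₂, x₃`. -/
def abelianization : (Fin 8 → K) →ₗ[K] (Fin 3 → K) :=
  LinearMap.funLeft K K (Fin.castLE (by decide))

theorem abelianization_apply (x : Fin 8 → K) (i : Fin 3) :
    abelianization x i = x (Fin.castLE (by decide) i) :=
  rfl

theorem abelianization_surjective : Function.Surjective (abelianization (K := K)) :=
  LinearMap.funLeft_surjective_of_injective _ _ _ (Fin.castLE_injective _)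

theorem abelianization_gBracket (a b c : K) (x y : Fin 8 → K) :
    abelianization (gBracket a b c x y) = 0 := by
  ext i
  fin_cases i <;> rfl

/-- The matrix `A` for which the `x₇`-coordinate of `[x, [y, z]]` in `g(a,b,c)` is
`A x ⬝ (y × z)`. -/
def matrixSeven (a c : K) : Matrix (Fin 3) (Fin 3) K :=
  !![0, a, c; 0, 0, -3; 1, 1, 0]

/-- The matrix `B` for which the `x₈`-coordinate of `[x, [y, z]]` in `g(a,b,c)` is
`B x ⬝ (y × z)`. -/
def matrixEight (a b : K) : Matrix (Fin 3) (Fin 3) K :=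
  !![0, b, -a; -1, 1, 0; 0, 0, -1]

theorem matrixSeven_mulVec (a c : K) (v : Fin 3 → K) :
    matrixSeven a c *ᵥ v = ![a * v 1 + c * v 2, -3 * v 2, v 0 + v 1] := by
  ext i
  simp only [Matrix.mulVec, Matrix.vec3_dotProduct]
  fin_cases i <;> simp [matrixSeven]

theorem matrixEight_mulVec (a b : K) (v : Fin 3 → K) :
    matrixEight a b *ᵥ v = ![b * v 1 - a * v 2, v 1 - v 0, -v 2] := by
  ext i
  simp only [Matrix.mulVec, Matrix.vec3_dotProduct]
  fin_cases i <;> simp [matrixEight] <;> ring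

theorem gBracket_gBracket_apply_six (a b c : K) (x y z : Fin 8 → K) :
    gBracket a b c x (gBracket a b c y z) 6 =
      matrixSeven a c *ᵥ abelianization x ⬝ᵥ abelianization y ⨯₃ abelianization z := by
  simp only [matrixSeven_mulVec, Matrix.vec3_dotProduct, cross_apply]
  simp [gBracket, plucker, abelianization_apply]
  ring

theorem gBracket_gBracket_apply_seven (a b c : K) (x y z : Fin 8 → K) :
    gBracket a b c x (gBracket a b c y z) 7 =
      matrixEight a b *ᵥ abelianization x ⬝ᵥ abelianization y ⨯₃ abelianization z := by
  simp only [matrixEight_mulVec, Matrix.vec3_dotProduct, cross_apply]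
  simp [gBracket, plucker, abelianization_apply]
  ring

section Plane

variable {a b c : K} {p : Fin 3 → K} {P : Submodule K (Fin 3 → K)}

theorem mul_eq_zero_and_eq_smul_of_matrixEight_mulVec_eq_zero {w : Fin 3 → K}
    (hw : matrixEight a b *ᵥ w = 0) : b * w 0 = 0 ∧ w = w 0 • ![1, 1, 0] := by
  rw [matrixEight_mulVec] at hw
  have h0 : b * w 1 - a * w 2 = 0 := congrFun hw 0
  have h1 : w 1 = w 0 := sub_eq_zero.mp (congrFun hw 1)
  have h2 : w 2 = 0 := neg_eq_zero.mp (congrFun hw 2)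
  refine ⟨by linear_combination h0 - b * h1 + a * h2, ?_⟩
  ext i
  fin_cases i <;> simp [h1, h2]

theorem eq_zero_and_mem_of_map_matrixEight_le (hP : 1 < finrank K P) (hp : p ≠ 0)
    (hB : P.map (matrixEight a b).mulVecLin ≤ K ∙ p) : b = 0 ∧ ![1, 1, 0] ∈ P := by
  obtain ⟨w, hwP, hw0, hw⟩ :=
    exists_mem_ne_zero_apply_eq_zero_of_finrank_lt _ hB (by rwa [finrank_span_singleton hp])
  obtain ⟨hbw, hwu⟩ := mul_eq_zero_and_eq_smul_of_matrixEight_mulVec_eq_zero hw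
  have hw0' : w 0 ≠ 0 := fun h ↦ hw0 (by rw [hwu, h, zero_smul])
  refine ⟨(mul_eq_zero.mp hbw).resolve_right hw0', ?_⟩
  rwa [hwu, smul_mem_iff _ hw0'] at hwP

theorem exists_mem_ne_zero_apply_eq_zero {ι : Type*} [Finite ι] {P : Submodule K (ι → K)}
    (hP : 1 < finrank K P) (i : ι) : ∃ v ∈ P, v ≠ 0 ∧ v i = 0 :=
  exists_mem_ne_zero_apply_eq_zero_of_finrank_lt (LinearMap.proj (R := K) (φ := fun _ ↦ K) i) le_top
    (by rwa [finrank_top, finrank_self])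

theorem mem_of_map_matrixSeven_le_of_map_matrixEight_le (hP : 1 < finrank K P) (hp : p ≠ 0)
    (hA : P.map (matrixSeven a c).mulVecLin ≤ K ∙ p)
    (hB : P.map (matrixEight a b).mulVecLin ≤ K ∙ p) : p ∈ P := by
  obtain ⟨rfl, huP⟩ := eq_zero_and_mem_of_map_matrixEight_le hP hp hB
  obtain ⟨v, hvP, hv0, hv1⟩ := exists_mem_ne_zero_apply_eq_zero hP 1
  obtain ⟨n, hn⟩ := mem_span_singleton.mp (hA (mem_map_of_mem huP))
  obtain ⟨m, hm⟩ := mem_span_singleton.mp (hB (mem_map_of_mem hvP))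
  have hAu : n • p = ![a, 0, 2] := by
    simpa [matrixSeven_mulVec, one_add_one_eq_two] using hn
  have hBv : m • p = ![-(a * v 2), -v 0, -v 2] := by simpa [matrixEight_mulVec, hv1] using hm
  have hm0 : m ≠ 0 := by
    rintro rfl
    obtain ⟨-, hvu⟩ := mul_eq_zero_and_eq_smul_of_matrixEight_mulVec_eq_zero
      (hm.symm.trans (zero_smul K p))
    have hv1' : v 1 = v 0 := by simpa using congrFun hvu 1
    exact hv0 (by rw [hvu, ← hv1', hv1, zero_smul])
  have hprop : m • ![a, 0, 2] = n • ![-(a * v 2), -v 0, -v 2] := by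
    rw [← hAu, ← hBv, smul_comm]
  have h0 : m * a = n * -(a * v 2) := congrFun hprop 0
  have h1 : m * 0 = n * -v 0 := congrFun hprop 1
  have h2 : m * 2 = n * -v 2 := congrFun hprop 2
  have hma : m * a = 0 := by linear_combination a * h2 - h0
  have ha : a = 0 := (mul_eq_zero.mp hma).resolve_left hm0
  have hmv : m * (2 * v 0) = 0 := by linear_combination v 0 * h2 - v 2 * h1
  have hv : 2 * v 0 = 0 := (mul_eq_zero.mp hmv).resolve_left hm0
  have hmp : m • p = v 0 • ![1, 1, 0] - v := by
    rw [hBv]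
    ext i
    fin_cases i
    · simp [ha]
    · have hneg : -v 0 = v 0 := by linear_combination -hv
      simpa [hv1] using hneg
    · simp
  rw [← smul_mem_iff _ hm0, hmp]
  exact sub_mem (smul_mem _ _ huP) hvP

end Plane

theorem not_linearIndependent_of_gBracket_gBracket_eq_zero (a b c : K) {x y z : Fin 8 → K}
    (h : ∀ v ∈ ({y, z} : Set (Fin 8 → K)), ∀ w ∈ ({y, z} : Set (Fin 8 → K)),
      gBracket a b c v (gBracket a b c x w) = 0) :
    ¬ LinearIndependent K ![abelianization x, abelianization y, abelianization z] := by
  intro hxyz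
  obtain ⟨hyz, hx⟩ := linearIndependent_finCons.mp hxyz
  have hP := finrank_span_eq_card hyz
  rw [Matrix.range_cons_cons_empty] at hx hP
  have hA := map_mulVecLin_span_pair_le hxyz (matrixSeven a c) (by
    rintro _ (rfl | rfl) _ (rfl | rfl) <;>
      rw [← gBracket_gBracket_apply_six a b c, h _ (by simp) _ (by simp), Pi.zero_apply])
  have hB := map_mulVecLin_span_pair_le hxyz (matrixEight a b) (by
    rintro _ (rfl | rfl) _ (rfl | rfl) <;>
      rw [← gBracket_gBracket_apply_seven a b c, h _ (by simp) _ (by simp), Pi.zero_apply])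
  exact hx (mem_of_map_matrixSeven_le_of_map_matrixEight_le (by simp [hP]) (hxyz.ne_zero 0) hA hB)

theorem g0Bracket_g0Bracket_single_eq_zero (a b c : K) {y z : Fin 8 → K} (hy : y 0 = 0)
    (hz : z 0 = 0) : g0Bracket a b c y (g0Bracket a b c (Pi.single 0 1) z) = 0 := by
  ext k
  fin_cases k <;> simp [g0Bracket, plucker, hy, hz]

theorem exists_g0Bracket_eq_single (a b c : K) {k : Fin 8}
    (hk : k ∉ Set.range ![(0 : Fin 8), 1, 2]) :
    ∃ x y, g0Bracket a b c x y = Pi.single k 1 := by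
  -- `x₄ = [x₁, x₂]`, `x₅ = [x₁, x₃]`, `x₆ = [x₂, x₃]`, `x₇ = [x₁, x₄]`, `x₈ = [x₁, x₅]`
  have hbracket : g0Bracket a b c (Pi.single (![0, 0, 0, 0, 0, 1, 0, 0] k) 1)
      (Pi.single (![0, 0, 0, 1, 2, 2, 3, 4] k) 1) = Pi.single k 1 := by
    ext l
    fin_cases k <;> first | (simp at hk; done) | (fin_cases l <;> simp [g0Bracket, plucker])
  exact ⟨_, _, hbracket⟩

theorem linearIndependent_map_single_of_map_g0Bracket_eq_zero {W : Type*} [AddCommGroup W]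
    [Module K W] {a b c : K} {f : (Fin 8 → K) →ₗ[K] W} (hf : Function.Surjective f)
    (hbracket : ∀ x y, f (g0Bracket a b c x y) = 0) (hW : finrank K W = 3) :
    LinearIndependent K ![f (Pi.single 0 1), f (Pi.single 1 1), f (Pi.single 2 1)] := by
  have hker : ∀ k ∉ Set.range ![(0 : Fin 8), 1, 2], f (Pi.basisFun K (Fin 8) k) = 0 := by
    intro k hk
    obtain ⟨x, y, hxy⟩ := exists_g0Bracket_eq_single a b c hk
    rw [Pi.basisFun_apply, ← hxy, hbracket]
  convert linearIndependent_map_basis_comp _ hf _ hker (by rw [hW, Fintype.card_fin]) using 1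
  ext i
  fin_cases i <;> simp

theorem g_not_iso_g0_general (a b c a' b' c' : K) :
    ¬ ∃ e : (Fin 8 → K) ≃ₗ[K] (Fin 8 → K),
      ∀ x y, e (gBracket a b c x y) = g0Bracket a' b' c' (e x) (e y) := by
  rintro ⟨e, he⟩
  have hsymm (x y : Fin 8 → K) :
      e.symm (g0Bracket a' b' c' x y) = gBracket a b c (e.symm x) (e.symm y) := by
    rw [e.symm_apply_eq, he, e.apply_symm_apply, e.apply_symm_apply]
  have hzero {y z : Fin 8 → K} (hy : y 0 = 0) (hz : z 0 = 0) :
      gBracket a b c (e.symm y) (gBracket a b c (e.symm (Pi.single 0 1)) (e.symm z)) = 0 := by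
    rw [← hsymm, ← hsymm, g0Bracket_g0Bracket_single_eq_zero _ _ _ hy hz, map_zero]
  have hkill (x y : Fin 8 → K) :
      (abelianization ∘ₗ e.symm.toLinearMap) (g0Bracket a' b' c' x y) = 0 := by
    simp [hsymm, abelianization_gBracket]
  have hframe := linearIndependent_map_single_of_map_g0Bracket_eq_zero
    (abelianization_surjective.comp e.symm.surjective) hkill (by simp)
  simp only [LinearMap.comp_apply, LinearEquiv.coe_coe] at hframe
  refine not_linearIndependent_of_gBracket_gBracket_eq_zero a b c ?_ hframe
  rintro _ (rfl | rfl) _ (rfl | rfl) <;> exact hzero (by simp) (by simp)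

end Brackets

/-- g_ℝ(a,b,c) is never isomorphic to g⁰_ℝ(a',b',c'). -/
theorem g_not_iso_g0 (a b c a' b' c' : ℝ) :
    ¬ LieIso (gc a b c) (g0c a' b' c') := by
  simpa only [LieIso, liebr_gc, liebr_g0c] using g_not_iso_g0_general a b c a' b' c'
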